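/- Let (X, B, μ) be a σ-finite measure space, p ≥ 1, f : X → X injective, bimeasurable, and satisfying μ(f⁻¹(B)) ≤ c μ(B) for all measurable B and some c > 0. If the composition operator T_f on L^p(X) is frequently hypercyclic, then for every forward wandering set W with 0 < μ(W) < ∞ (i.e., W, f(W), f²(W), … pairwise disjoint), ∑_{n∈ℕ} ‖ dμ/d(μ∘fⁿ) |_W ‖_∞^{-1} < ∞. -/

import Mathlib

open MeasureTheory Set Filter
open scoped ENNReal NNReal

/-- The image of a set under the `n`-th power (`n ∈ ℤ`) of a bijection `f`. -/
def zimg {X : Type*} (f : X → X) (n : ℤ) (B : Set X) : Set X :=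
  if 0 ≤ n then f^[n.toNat] '' B else f^[(-n).toNat] ⁻¹' B

/-- `W` is a wandering set for `f`: the sets `fⁿ(W)`, `n ∈ ℤ`, are pairwise disjoint. -/
def Wandering {X : Type*} (f : X → X) (W : Set X) : Prop :=
  Pairwise fun m n : ℤ => Disjoint (zimg f m W) (zimg f n W)

/-- `W` generates `X`: `X = ⋃_{n ∈ ℤ} fⁿ(W)`. -/
def GeneratedBy {X : Type*} (f : X → X) (W : Set X) : Prop :=
  (⋃ n : ℤ, zimg f n W) = Set.univ

/-- The Summability Condition (SC). -/
def SCcond {X : Type*} [MeasurableSpace X] (μ : Measure X) (f : X → X) : Prop :=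
  ∀ ε : ℝ≥0∞, 0 < ε → ∀ B : Set X, MeasurableSet B → μ B < ⊤ →
    ∃ B' : Set X, B' ⊆ B ∧ MeasurableSet B' ∧ μ (B \ B') < ε ∧
      ∑' n : ℤ, μ (zimg f n B') ≠ ⊤

/-- A measurable system: `μ` σ-finite with `μ(X) > 0`, `f` bijective, bimeasurable,
nonsingular, and `μ(f⁻¹(B)) ≤ c·μ(B)` with `0 < c < ∞`. -/
def MeasSystem {X : Type*} [MeasurableSpace X] (μ : Measure X) (f : X → X) (c : ℝ≥0∞) : Prop :=
  SigmaFinite μ ∧ 0 < μ Set.univ ∧ Function.Bijective f ∧ Measurable f ∧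
  (∀ B : Set X, MeasurableSet B → MeasurableSet (f '' B)) ∧
  (∀ B : Set X, MeasurableSet B → (μ (f ⁻¹' B) = 0 ↔ μ B = 0)) ∧
  0 < c ∧ c ≠ ⊤ ∧ (∀ B : Set X, MeasurableSet B → μ (f ⁻¹' B) ≤ c * μ B)

/-- `f` is dissipative: there is a generating wandering set. -/
def Dissipative {X : Type*} [MeasurableSpace X] (f : X → X) : Prop :=
  ∃ W : Set X, MeasurableSet W ∧ Wandering f W ∧ GeneratedBy f W

/-- A set of natural numbers has positive lower density. -/
def PosLowerDensity (A : Set ℕ) : Prop :=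
  0 < Filter.liminf (fun N : ℕ => ((A ∩ Set.Icc 1 N).ncard : ℝ) / N) Filter.atTop

/-- `x` is a recurrent point of `f`. -/
def Recurrent {X : Type*} [TopologicalSpace X] (f : X → X) (x : X) : Prop :=
  ∀ U : Set X, IsOpen U → x ∈ U → ∃ n : ℕ, 1 ≤ n ∧ f^[n] x ∈ U

/-- A continuous linear operator is frequently hypercyclic. -/
def FreqHC {E : Type*} [NormedAddCommGroup E] [NormedSpace ℝ E] (T : E →L[ℝ] E) : Prop :=
  ∃ φ : E, ∀ U : Set E, IsOpen U → U.Nonempty → PosLowerDensity {n : ℕ | (T ^ n) φ ∈ U}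

/-- `d(W) = ‖dμ/dν |_W‖_∞⁻¹`, with the convention `1/∞ = 0`. -/
noncomputable def dSeq {X : Type*} [MeasurableSpace X] (μ ν : Measure X) (W : Set X) : ℝ≥0∞ :=
  (essSup (μ.rnDeriv ν) (μ.restrict W))⁻¹

/-!
Write `dₙ = dSeq μ (ν n) W`. It is the largest constant with `dₙ μ(B) ≤ μ(fⁿ(B))` for all `B ⊆ W`,
so that `dₙ ≤ c dₙ₊₁`. Let `A` be the set of times at which the orbit of `φ` is close to the
indicator of `W`. For `n ∈ A` the function `φ ∘ fⁿ` is large on a subset `Bₙ` of `W` with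
`μ(Bₙ) ≥ μ(W) / 2`, and large only on a set of measure at most some `C`. If `m` and `m + k` are in
`A`, then `φ ∘ fᵐ` is large on `fᵏ(Bₘ₊ₖ)`. These images are disjoint as `k` varies, hence
`∑ dₖ ≤ 2 C / μ(W)` over the `k` with `m + k ∈ A`.

Averaging over `m ∈ A` bounds the sum of `dₖ` over the `k` that are differences of two elements of
`A` with positive frequency. As `A` has positive density, such differences have bounded gaps, and
`dₙ ≤ c dₙ₊₁` controls `dₙ` inside a gap by the value at its right end.
-/

open scoped Finset Topology

section PopularDifferences

open Classical in
/-- The counting window `A ∩ [1, N]` of a set of natural numbers, as a finset. -/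
noncomputable def window (A : Set ℕ) (N : ℕ) : Finset ℕ := {m ∈ Finset.Icc 1 N | m ∈ A}

/-- The differences `k` of elements of `A` that occur with frequency at least `1 / Q` along the
ultrafilter `𝒰`. Using an ultrafilter instead of upper densities lets finitely many differences be
popular simultaneously at one `N`, and likewise for unpopular ones. -/
def popularDifferences (𝒰 : Ultrafilter ℕ) (A : Set ℕ) (Q : ℕ) : Set ℕ :=
  {k | ∀ᶠ N in 𝒰, N < Q * #(window (A ∩ (· + k) ⁻¹' A) N)}

variable {𝒰 : Ultrafilter ℕ} {A : Set ℕ} {N : ℕ}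

lemma mem_window {m : ℕ} : m ∈ window A N ↔ (1 ≤ m ∧ m ≤ N) ∧ m ∈ A := by
  classical simp [window]

lemma card_window_le : #(window A N) ≤ N := by
  classical simpa [window] using Finset.card_filter_le (Finset.Icc 1 N) (· ∈ A)

lemma ncard_inter_Icc_eq_card_window : (A ∩ Icc 1 N).ncard = #(window A N) := by
  rw [← ncard_coe_finset]
  congr 1
  ext m
  simp only [mem_inter_iff, mem_Icc, Finset.mem_coe, mem_window, and_comm]

lemma sum_card_le_card_biUnion_add {ι α : Type*} [DecidableEq α] (t : Finset ι) (S : ι → Finset α)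
    {b : ℕ} (hS : (t : Set ι).Pairwise fun i j => #(S i ∩ S j) ≤ b) :
    ∑ i ∈ t, #(S i) ≤ #(t.biUnion S) + #t ^ 2 * b := by
  classical
  induction t using Finset.induction_on with
  | empty => simp
  | insert s t hs ih =>
    have overlap : #(S s ∩ t.biUnion S) ≤ #t * b := by
      rw [Finset.inter_biUnion]
      refine Finset.card_biUnion_le_card_mul _ _ _ fun i hi => ?_
      exact hS (by simp) (by simp [hi]) (ne_of_mem_of_not_mem hi hs).symm
    have bound := ih (hS.mono (by simp))
    have inclusion_exclusion := Finset.card_union_add_card_inter (S s) (t.biUnion S)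
    rw [Finset.sum_insert hs, Finset.biUnion_insert, Finset.card_insert_of_notMem hs]
    nlinarith

lemma card_image_window_inter_le {i j : ℕ} (hij : i ≤ j) :
    #((window A N).image (· + j) ∩ (window A N).image (· + i)) ≤
      #(window (A ∩ (· + (j - i)) ⁻¹' A) N) := by
  have translate : (window A N).image (· + j) ∩ (window A N).image (· + i) ⊆
      (window (A ∩ (· + (j - i)) ⁻¹' A) N).image (· + j) := by
    intro x hx
    simp only [Finset.mem_inter, Finset.mem_image, mem_window] at hx ⊢
    obtain ⟨⟨a, ⟨haN, haA⟩, rfl⟩, b, ⟨-, hbA⟩, hb⟩ := hx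
    obtain rfl : b = a + (j - i) := by omega
    exact ⟨a, ⟨haN, haA, hbA⟩, rfl⟩
  exact (Finset.card_le_card translate).trans Finset.card_image_le

lemma card_mul_card_window_le {t : Finset ℕ} {b : ℕ}
    (hb : ∀ i ∈ t, ∀ j ∈ t, i < j → #(window (A ∩ (· + (j - i)) ⁻¹' A) N) ≤ b) :
    #t * #(window A N) ≤ N + t.sup id + #t ^ 2 * b := by
  set S : ℕ → Finset ℕ := fun i => (window A N).image (· + i)
  have almost_disjoint : (t : Set ℕ).Pairwise fun i j => #(S i ∩ S j) ≤ b := by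
    intro i hi j hj hij
    rcases hij.lt_or_gt with h | h
    · rw [Finset.inter_comm]
      exact (card_image_window_inter_le h.le).trans (hb i hi j hj h)
    · exact (card_image_window_inter_le h.le).trans (hb j hj i hi h)
  have union_subset : t.biUnion S ⊆ Finset.Icc 1 (N + t.sup id) := by
    intro x hx
    simp only [S, Finset.mem_biUnion, Finset.mem_image, mem_window, Finset.mem_Icc] at hx ⊢
    obtain ⟨i, hi, a, ⟨⟨ha1, haN⟩, -⟩, rfl⟩ := hx
    have : i ≤ t.sup id := Finset.le_sup (f := id) hi
    omega
  calc #t * #(window A N)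
      = ∑ i ∈ t, #(S i) := by
        simp [S, Finset.card_image_of_injective _ (add_left_injective _)]
    _ ≤ #(t.biUnion S) + #t ^ 2 * b := sum_card_le_card_biUnion_add t S almost_disjoint
    _ ≤ N + t.sup id + #t ^ 2 * b := by
        gcongr
        simpa using Finset.card_le_card union_subset

/-- If no difference of elements of `t` is popular, the translates `A + i`, `i ∈ t`, are almost
disjoint, and `3 q` almost disjoint sets of density `1 / q` do not fit into `ℕ`. -/
lemma exists_sub_mem_popularDifferences {q : ℕ} (h𝒰 : (𝒰 : Filter ℕ) ≤ atTop)
    (hA : ∀ᶠ N in 𝒰, N ≤ q * #(window A N)) {t : Finset ℕ} (ht : #t = 3 * q) :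
    ∃ i ∈ t, ∃ j ∈ t, i < j ∧ j - i ∈ popularDifferences 𝒰 A ((3 * q) ^ 2) := by
  by_contra! unpopular
  have rare : ∀ᶠ N in 𝒰, ∀ i ∈ t, ∀ j ∈ t, i < j →
      (3 * q) ^ 2 * #(window (A ∩ (· + (j - i)) ⁻¹' A) N) ≤ N := by
    simp only [eventually_all_finset, eventually_imp_distrib_left]
    intro i hi j hj hij
    simpa only [popularDifferences, mem_ofPred_eq, ← Ultrafilter.eventually_not, not_lt]
      using unpopular i hi j hj hij
  obtain ⟨N, hN, dense, rareN⟩ :=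
    (((eventually_gt_atTop (t.sup id)).filter_mono h𝒰).and (hA.and rare)).exists
  have packing : 3 * q * #(window A N) ≤ N + t.sup id + (3 * q) ^ 2 * (N / (3 * q) ^ 2) := by
    have hq : 0 < (3 * q) ^ 2 := by
      have : q ≠ 0 := by
        rintro rfl
        omega
      positivity
    rw [← ht]
    refine card_mul_card_window_le fun i hi j hj hij => ?_
    rw [ht, Nat.le_div_iff_mul_le hq, mul_comm]
    exact rareN i hi j hj hij
  have := Nat.mul_div_le N ((3 * q) ^ 2)
  nlinarith

lemma exists_card_eq_of_unbounded_gaps {F : Set ℕ} (hF : ∀ L, ∃ a, ∀ j ≤ L, a + j ∉ F) (r : ℕ) :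
    ∃ t : Finset ℕ, #t = r ∧ ∀ i ∈ t, ∀ j ∈ t, i < j → j - i ∉ F := by
  induction r with
  | zero => exact ⟨∅, by simp⟩
  | succ r ih =>
    obtain ⟨t, ht, htF⟩ := ih
    obtain ⟨L, hL⟩ : ∃ L, ∀ i ∈ t, i < L :=
      ⟨t.sup id + 1, fun i hi => Nat.lt_succ_of_le (Finset.le_sup (f := id) hi)⟩
    obtain ⟨a, ha⟩ := hF L
    refine ⟨insert (a + L) t, ?_, fun i hi j hj hij => ?_⟩
    · rw [Finset.card_insert_of_notMem fun h => absurd (hL _ h) (by omega), ht]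
    rcases Finset.mem_insert.1 hi with rfl | hi <;> rcases Finset.mem_insert.1 hj with rfl | hj
    · omega
    · have := hL j hj
      omega
    · have := hL i hi
      rw [Nat.add_sub_assoc this.le]
      exact ha _ (Nat.sub_le _ _)
    · exact htF i hi j hj hij

lemma exists_bounded_gaps_popularDifferences {q : ℕ} (h𝒰 : (𝒰 : Filter ℕ) ≤ atTop)
    (hA : ∀ᶠ N in 𝒰, N ≤ q * #(window A N)) :
    ∃ L, ∀ a, ∃ j ≤ L, a + j ∈ popularDifferences 𝒰 A ((3 * q) ^ 2) := by
  by_contra! unbounded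
  obtain ⟨t, ht, htF⟩ := exists_card_eq_of_unbounded_gaps unbounded (3 * q)
  obtain ⟨i, hi, j, hj, hij, popular⟩ := exists_sub_mem_popularDifferences h𝒰 hA ht
  exact htF i hi j hj hij popular

end PopularDifferences

section Summation

variable {A : Set ℕ} {d : ℕ → ℝ≥0∞}

open Classical in
/-- Double counting of the pairs `m, m + k ∈ A` with weight `d k`. -/
lemma sum_mul_card_window_le {C : ℝ≥0∞}
    (hC : ∀ m ∈ A, ∑' k, ((m + ·) ⁻¹' A).indicator d k ≤ C) (s : Finset ℕ) (N : ℕ) :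
    ∑ k ∈ s, d k * #(window (A ∩ (· + k) ⁻¹' A) N) ≤ C * N := by
  have count (k : ℕ) : d k * #(window (A ∩ (· + k) ⁻¹' A) N) =
      ∑ m ∈ window A N, ((m + ·) ⁻¹' A).indicator d k := by
    have : window (A ∩ (· + k) ⁻¹' A) N = {m ∈ window A N | m + k ∈ A} := by
      ext m
      simp only [mem_window, Finset.mem_filter, mem_inter_iff, mem_preimage, and_assoc]
    simp only [this, indicator_apply, mem_preimage, ← Finset.sum_filter, Finset.sum_const,
      nsmul_eq_mul, mul_comm]
  calc ∑ k ∈ s, d k * #(window (A ∩ (· + k) ⁻¹' A) N)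
      = ∑ m ∈ window A N, ∑ k ∈ s, ((m + ·) ⁻¹' A).indicator d k := by
        simp only [count]
        exact Finset.sum_comm
    _ ≤ ∑ _m ∈ window A N, C :=
        Finset.sum_le_sum fun _ hm => (ENNReal.sum_le_tsum s).trans (hC _ (mem_window.1 hm).2)
    _ ≤ C * N := by
        rw [Finset.sum_const, nsmul_eq_mul, mul_comm]
        gcongr
        exact card_window_le

lemma tsum_indicator_popularDifferences_le {𝒰 : Ultrafilter ℕ} (h𝒰 : (𝒰 : Filter ℕ) ≤ atTop)
    {C : ℝ≥0∞} (hC : ∀ m ∈ A, ∑' k, ((m + ·) ⁻¹' A).indicator d k ≤ C) (Q : ℕ) :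
    ∑' k, (popularDifferences 𝒰 A Q).indicator d k ≤ Q * C := by
  classical
  rw [ENNReal.tsum_eq_iSup_sum]
  refine iSup_le fun s => ?_
  simp only [indicator_apply, ← Finset.sum_filter]
  set s' := {k ∈ s | k ∈ popularDifferences 𝒰 A Q}
  have popular : ∀ᶠ N in 𝒰, ∀ k ∈ s', N < Q * #(window (A ∩ (· + k) ⁻¹' A) N) :=
    (eventually_all_finset _).2 fun k hk => (Finset.mem_filter.1 hk).2
  obtain ⟨N, hN, popularN⟩ := (((eventually_ne_atTop 0).filter_mono h𝒰).and popular).exists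
  have scaled : (∑ k ∈ s', d k) * N ≤ Q * C * N :=
    calc (∑ k ∈ s', d k) * N
        ≤ ∑ k ∈ s', Q * (d k * #(window (A ∩ (· + k) ⁻¹' A) N)) := by
          rw [Finset.sum_mul]
          refine Finset.sum_le_sum fun k hk => ?_
          rw [mul_left_comm]
          gcongr
          exact_mod_cast (popularN k hk).le
      _ ≤ Q * C * N := by
          rw [← Finset.mul_sum, mul_assoc]
          gcongr
          exact sum_mul_card_window_le hC s' N
  exact (ENNReal.mul_le_mul_iff_left (by simpa using hN) (by simp)).1 scaled

lemma le_pow_mul_add {c : ℝ≥0∞} (hd : ∀ n, d n ≤ c * d (n + 1)) (n j : ℕ) :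
    d n ≤ c ^ j * d (n + j) := by
  induction j with
  | zero => simp
  | succ j ih =>
    grw [ih, hd (n + j), pow_succ, mul_assoc, add_assoc]

lemma tsum_ne_top_of_bounded_gaps {c : ℝ≥0∞} (hc : c ≠ ∞) (hd : ∀ n, d n ≤ c * d (n + 1))
    {F : Set ℕ} {L : ℕ} (hF : ∀ a, ∃ j ≤ L, a + j ∈ F) (hsum : ∑' k, F.indicator d k ≠ ∞) :
    ∑' n, d n ≠ ∞ := by
  have control (n : ℕ) : d n ≤ ∑ j ∈ Finset.range (L + 1), c ^ j * F.indicator d (n + j) := by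
    obtain ⟨j, hj, hjF⟩ := hF n
    calc d n ≤ c ^ j * F.indicator d (n + j) := by
          rw [indicator_of_mem hjF]
          exact le_pow_mul_add hd n j
      _ ≤ _ := Finset.single_le_sum_of_canonicallyOrdered
          (f := fun j => c ^ j * F.indicator d (n + j)) (by simpa [Nat.lt_succ_iff] using hj)
  refine ne_top_of_le_ne_top (b := ∑ j ∈ Finset.range (L + 1), c ^ j * ∑' k, F.indicator d k)
    (ENNReal.sum_ne_top.2 fun j _ => ENNReal.mul_ne_top (ENNReal.pow_ne_top hc) hsum) ?_
  calc ∑' n, d n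
      ≤ ∑' n, ∑ j ∈ Finset.range (L + 1), c ^ j * F.indicator d (n + j) :=
        ENNReal.tsum_le_tsum control
    _ = ∑ j ∈ Finset.range (L + 1), c ^ j * ∑' n, F.indicator d (n + j) := by
        rw [Summable.tsum_finsetSum fun _ _ => ENNReal.summable]
        simp only [ENNReal.tsum_mul_left]
    _ ≤ ∑ j ∈ Finset.range (L + 1), c ^ j * ∑' k, F.indicator d k := by
        gcongr ∑ j ∈ _, c ^ j * ?_
        exact ENNReal.tsum_comp_le_tsum_of_injective (add_left_injective _) _

end Summation

section UpperDensity

/-- A set of natural numbers has positive upper density. -/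
def PosUpperDensity (A : Set ℕ) : Prop :=
  0 < limsup (fun N : ℕ => ((A ∩ Icc 1 N).ncard : ℝ) / N) atTop

variable {A : Set ℕ}

lemma PosLowerDensity.posUpperDensity (hA : PosLowerDensity A) : PosUpperDensity A := by
  refine lt_of_lt_of_le hA (liminf_le_limsup (isBoundedUnder_of ⟨1, fun N => ?_⟩)
    (isBoundedUnder_of ⟨0, fun N => by positivity⟩))
  rw [ncard_inter_Icc_eq_card_window]
  exact div_le_one_of_le₀ (by exact_mod_cast card_window_le) N.cast_nonneg

lemma PosUpperDensity.exists_ultrafilter (hA : PosUpperDensity A) :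
    ∃ (𝒰 : Ultrafilter ℕ) (q : ℕ), (𝒰 : Filter ℕ) ≤ atTop ∧ ∀ᶠ N in 𝒰, N ≤ q * #(window A N) := by
  obtain ⟨δ, hδ, hδA⟩ := exists_between hA
  obtain ⟨q, hq⟩ := exists_nat_gt δ⁻¹
  have dense : ∃ᶠ N in atTop, N ≤ q * #(window A N) := by
    refine (frequently_lt_of_lt_limsup
      (isCoboundedUnder_le_of_le atTop (x := 0) fun N => by positivity) hδA).mono fun N hN => ?_
    rcases N.eq_zero_or_pos with rfl | hN0
    · exact Nat.zero_le _
    rw [ncard_inter_Icc_eq_card_window, lt_div_iff₀ (by exact_mod_cast hN0)] at hN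
    have : (N : ℝ) ≤ q * #(window A N) :=
      calc (N : ℝ) = δ⁻¹ * (δ * N) := by field_simp
        _ ≤ q * #(window A N) := by gcongr
    exact_mod_cast this
  have : NeBot (atTop ⊓ 𝓟 {N | N ≤ q * #(window A N)}) := frequently_iff_neBot.1 dense
  obtain ⟨𝒰, h𝒰⟩ := Ultrafilter.exists_le (atTop ⊓ 𝓟 {N | N ≤ q * #(window A N)})
  exact ⟨𝒰, q, h𝒰.trans inf_le_left, le_principal_iff.1 (h𝒰.trans inf_le_right)⟩

theorem PosUpperDensity.tsum_ne_top (hA : PosUpperDensity A) {d : ℕ → ℝ≥0∞} {c C : ℝ≥0∞}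
    (hc : c ≠ ∞) (hd : ∀ n, d n ≤ c * d (n + 1)) (hC : C ≠ ∞)
    (hsum : ∀ m ∈ A, ∑' k, ((m + ·) ⁻¹' A).indicator d k ≤ C) : ∑' n, d n ≠ ∞ := by
  obtain ⟨𝒰, q, h𝒰, dense⟩ := hA.exists_ultrafilter
  obtain ⟨L, gaps⟩ := exists_bounded_gaps_popularDifferences h𝒰 dense
  refine tsum_ne_top_of_bounded_gaps hc hd gaps (ne_top_of_le_ne_top ?_
    (tsum_indicator_popularDifferences_le h𝒰 hsum ((3 * q) ^ 2)))
  exact ENNReal.mul_ne_top (ENNReal.natCast_ne_top _) hC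

end UpperDensity

section RadonNikodym

variable {X : Type*} [MeasurableSpace X] {μ ν ν' : Measure X} [SigmaFinite μ] [SigmaFinite ν]
  [SigmaFinite ν'] {W : Set X}

lemma measure_le_essSup_rnDeriv_mul (hμν : μ ≪ ν) (hW : MeasurableSet W) {B : Set X}
    (hBW : B ⊆ W) : μ B ≤ essSup (μ.rnDeriv ν) (μ.restrict W) * ν B := by
  set S := essSup (μ.rnDeriv ν) (μ.restrict W)
  have hS : ∀ᵐ x ∂μ, x ∈ W → μ.rnDeriv ν x ≤ S := (ae_restrict_iff' hW).1 ae_le_essSup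
  calc μ B ≤ μ (B ∩ {x | μ.rnDeriv ν x ≤ S}) := by
        refine measure_mono_ae ?_
        filter_upwards [hS] with x hx hxB using ⟨hxB, hx (hBW hxB)⟩
    _ = ∫⁻ x in B ∩ {x | μ.rnDeriv ν x ≤ S}, μ.rnDeriv ν x ∂ν :=
        (Measure.setLIntegral_rnDeriv hμν _).symm
    _ ≤ ∫⁻ _ in B ∩ {x | μ.rnDeriv ν x ≤ S}, S ∂ν :=
        setLIntegral_mono measurable_const fun x hx => hx.2
    _ ≤ S * ν B := by
        rw [setLIntegral_const]
        gcongr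
        exact inter_subset_left

lemma essSup_rnDeriv_le_of_forall_measure_le (hμν : μ ≪ ν) (hW : MeasurableSet W) {a : ℝ≥0∞}
    (h : ∀ B ⊆ W, MeasurableSet B → μ B ≤ a * ν B) :
    essSup (μ.rnDeriv ν) (μ.restrict W) ≤ a := by
  have bound : W.indicator (μ.rnDeriv ν) ≤ᵐ[ν] fun _ => a := by
    refine ae_le_of_forall_setLIntegral_le_of_sigmaFinite
      ((Measure.measurable_rnDeriv _ _).indicator hW) fun s hs _ => ?_
    rw [setLIntegral_indicator hW, Measure.setLIntegral_rnDeriv hμν, setLIntegral_const]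
    grw [h _ inter_subset_left (hW.inter hs), inter_subset_right]
  refine essSup_le_of_ae_le _ ((ae_restrict_iff' hW).2 ?_)
  filter_upwards [hμν.ae_le bound] with x hx hxW
  simpa only [indicator_of_mem hxW] using hx

lemma dSeq_ne_top (hμν : μ ≪ ν) (hW : MeasurableSet W) (hW0 : μ W ≠ 0) : dSeq μ ν W ≠ ∞ := by
  refine ENNReal.inv_ne_top.2 fun h => hW0 ?_
  simpa [h] using measure_le_essSup_rnDeriv_mul hμν hW Subset.rfl

lemma le_dSeq_iff (hμν : μ ≪ ν) (hW : MeasurableSet W) {a : ℝ≥0∞} (ha : a ≠ ∞) :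
    a ≤ dSeq μ ν W ↔ ∀ B ⊆ W, MeasurableSet B → a * μ B ≤ ν B := by
  rcases eq_or_ne a 0 with rfl | ha0
  · simp
  simp only [dSeq, ENNReal.le_inv_iff_le_inv (a := a), ENNReal.mul_le_iff_le_inv ha0 ha]
  refine ⟨fun h B hBW _ => ?_, essSup_rnDeriv_le_of_forall_measure_le hμν hW⟩
  grw [measure_le_essSup_rnDeriv_mul hμν hW hBW, h]

lemma dSeq_mul_measure_le (hμν : μ ≪ ν) (hW : MeasurableSet W) (hW0 : μ W ≠ 0) {B : Set X}
    (hBW : B ⊆ W) (hB : MeasurableSet B) : dSeq μ ν W * μ B ≤ ν B :=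
  (le_dSeq_iff hμν hW (dSeq_ne_top hμν hW hW0)).1 le_rfl B hBW hB

lemma dSeq_le_mul_of_le_smul (hμν : μ ≪ ν) {c : ℝ≥0∞} (hc : c ≠ ∞)
    (hνν' : ν ≤ c • ν') (hW : MeasurableSet W) (hW0 : μ W ≠ 0) :
    dSeq μ ν W ≤ c * dSeq μ ν' W := by
  have hμν' : μ ≪ ν' := hμν.trans (Measure.absolutelyContinuous_of_le_smul hνν')
  have hc0 : c ≠ 0 := by
    rintro rfl
    exact hW0 (hμν (by simpa using hνν' W))
  have hfin : c⁻¹ * dSeq μ ν W ≠ ∞ :=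
    ENNReal.mul_ne_top (ENNReal.inv_ne_top.2 hc0) (dSeq_ne_top hμν hW hW0)
  rw [← ENNReal.inv_mul_le_iff hc0 hc, le_dSeq_iff hμν' hW hfin]
  intro B hBW hB
  rw [mul_assoc, ENNReal.inv_mul_le_iff hc0 hc]
  exact (dSeq_mul_measure_le hμν hW hW0 hBW hB).trans (hνν' B)

end RadonNikodym

section Dynamics

variable {X : Type*} [MeasurableSpace X] {μ : Measure X} {f : X → X}

lemma measurableEmbedding_iterate (hf : MeasurableEmbedding f) (n : ℕ) :
    MeasurableEmbedding f^[n] := by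
  induction n with
  | zero => exact .id
  | succ n ih => exact ih.comp hf

lemma sigmaFinite_comap {Y : Type*} [MeasurableSpace Y] {ν : Measure Y} [SigmaFinite ν]
    {g : X → Y} (hg : MeasurableEmbedding g) : SigmaFinite (ν.comap g) := by
  have : SigmaFinite ((ν.comap g).map g) := by
    rw [hg.map_comap]
    infer_instance
  exact .of_map _ hg.measurable.aemeasurable this

lemma comap_iterate_le_smul_comap_iterate_succ (hf : MeasurableEmbedding f) {c : ℝ≥0∞}
    (hμ : μ.map f ≤ c • μ) (n : ℕ) : μ.comap f^[n] ≤ c • μ.comap f^[n + 1] := by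
  refine Measure.le_iff.2 fun B _ => ?_
  have preimage_image : f ⁻¹' (f^[n + 1] '' B) = f^[n] '' B := by
    rw [Function.iterate_succ', image_comp, hf.injective.preimage_image]
  rw [Measure.smul_apply, (measurableEmbedding_iterate hf _).comap_apply,
    (measurableEmbedding_iterate hf _).comap_apply, ← preimage_image, ← hf.map_apply]
  exact hμ _

lemma absolutelyContinuous_comap_iterate (hf : MeasurableEmbedding f) {c : ℝ≥0∞}
    (hμ : μ.map f ≤ c • μ) (n : ℕ) : μ ≪ μ.comap f^[n] := by
  induction n with
  | zero =>
    rw [Function.iterate_zero, show (id : X → X) = fun x => x from rfl, Measure.comap_id]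
  | succ n ih =>
    exact ih.trans (Measure.absolutelyContinuous_of_le_smul
      (comap_iterate_le_smul_comap_iterate_succ hf hμ n))

variable {W : Set X}

lemma tsum_measure_image_visit_le (hf : MeasurableEmbedding f) (hW : MeasurableSet W)
    (hWf : Pairwise fun m n : ℕ => Disjoint (f^[m] '' W) (f^[n] '' W)) {S : Set X}
    (hS : MeasurableSet S) (m : ℕ) :
    ∑' k, μ (f^[k] '' (W ∩ f^[m + k] ⁻¹' S)) ≤ μ (f^[m] ⁻¹' S) := by
  have measurable_visit (k : ℕ) : MeasurableSet (f^[k] '' (W ∩ f^[m + k] ⁻¹' S)) :=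
    (measurableEmbedding_iterate hf k).measurableSet_image.2
      (hW.inter ((measurableEmbedding_iterate hf _).measurable hS))
  calc ∑' k, μ (f^[k] '' (W ∩ f^[m + k] ⁻¹' S))
      ≤ μ (⋃ k, f^[k] '' (W ∩ f^[m + k] ⁻¹' S)) :=
        tsum_meas_le_meas_iUnion_of_disjoint μ measurable_visit fun i j hij =>
          (hWf hij).mono (image_mono inter_subset_left) (image_mono inter_subset_left)
    _ ≤ μ (f^[m] ⁻¹' S) := by
        refine measure_mono (iUnion_subset fun k => ?_)
        rintro _ ⟨x, ⟨-, hx⟩, rfl⟩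
        rwa [mem_preimage, ← Function.iterate_add_apply]

theorem tsum_dSeq_comap_iterate_ne_top [SigmaFinite μ] (hf : MeasurableEmbedding f) {c : ℝ≥0∞}
    (hc : c ≠ ∞) (hμ : μ.map f ≤ c • μ) (hW : MeasurableSet W) (hW0 : μ W ≠ 0)
    (hWf : Pairwise fun m n : ℕ => Disjoint (f^[m] '' W) (f^[n] '' W)) {S : Set X}
    (hS : MeasurableSet S) {A : Set ℕ} (hA : PosUpperDensity A) {b C : ℝ≥0∞} (hb : b ≠ 0)
    (hC : C ≠ ∞) (hbA : ∀ n ∈ A, b ≤ μ (W ∩ f^[n] ⁻¹' S)) (hCA : ∀ n ∈ A, μ (f^[n] ⁻¹' S) ≤ C) :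
    ∑' n, dSeq μ (μ.comap f^[n]) W ≠ ∞ := by
  have hfn := measurableEmbedding_iterate hf
  have hac := absolutelyContinuous_comap_iterate hf hμ
  have (n : ℕ) : SigmaFinite (μ.comap f^[n]) := sigmaFinite_comap (hfn n)
  refine hA.tsum_ne_top hc (fun n => dSeq_le_mul_of_le_smul (hac n) hc
    (comap_iterate_le_smul_comap_iterate_succ hf hμ n) hW hW0)
    (ENNReal.div_ne_top hC hb) fun m hm => ?_
  rw [ENNReal.le_div_iff_mul_le (Or.inl hb) (Or.inr hC), ← ENNReal.tsum_mul_right]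
  refine (ENNReal.tsum_le_tsum fun k => ?_).trans
    ((tsum_measure_image_visit_le hf hW hWf hS m).trans (hCA m hm))
  by_cases hk : k ∈ (m + ·) ⁻¹' A
  · rw [indicator_of_mem hk, ← (hfn k).comap_apply]
    grw [hbA (m + k) hk]
    exact dSeq_mul_measure_le (hac k) hW hW0 inter_subset_left
      (hW.inter ((hfn (m + k)).measurable hS))
  · simp [indicator_of_notMem hk]

end Dynamics

section Lp

variable {X E : Type*} [MeasurableSpace X] [NormedAddCommGroup E] {μ : Measure X} {p : ℝ≥0∞}
  {W : Set X}

lemma half_enorm_le_or_half_enorm_le_edist {G : Type*} [SeminormedAddCommGroup G] (u v : G) :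
    ‖v‖ₑ / 2 ≤ ‖u‖ₑ ∨ ‖v‖ₑ / 2 ≤ edist u v := by
  by_contra! small
  have triangle : ‖v‖ₑ ≤ ‖u‖ₑ + edist u v := by
    simpa only [edist_zero_right, edist_comm v u, add_comm] using edist_triangle v u 0
  exact absurd (triangle.trans_lt (ENNReal.add_lt_add small.1 small.2)) (by simp)

lemma eventually_nhds_indicatorConstLp [Fact (1 ≤ p)] (hW : MeasurableSet W) (hW0 : μ W ≠ 0)
    (hWfin : μ W ≠ ∞) {v : E} (hv : v ≠ 0) :
    ∀ᶠ ψ : Lp E p μ in 𝓝 (indicatorConstLp p hW hWfin v),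
      μ W / 2 ≤ μ (W ∩ {x | ‖v‖ₑ / 2 ≤ ‖ψ x‖ₑ}) ∧
        μ {x | ‖v‖ₑ / 2 ≤ ‖ψ x‖ₑ} ≤ μ W + μ W / 2 := by
  set g := indicatorConstLp p hW hWfin v
  have hg : g =ᵐ[μ] W.indicator fun _ => v := indicatorConstLp_coeFn
  have close : ∀ᶠ ψ : Lp E p μ in 𝓝 g, μ {x | ‖v‖ₑ / 2 ≤ edist (ψ x) (g x)} ≤ μ W / 2 :=
    ((tendstoInMeasure_of_tendsto_Lp tendsto_id _
      (ENNReal.half_pos (enorm_ne_zero.2 hv))).eventually_lt_const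
        (ENNReal.half_pos hW0)).mono fun _ => le_of_lt
  refine close.mono fun ψ hψ => ⟨?_, ?_⟩
  · have cover : W ≤ᵐ[μ] (W ∩ {x | ‖v‖ₑ / 2 ≤ ‖ψ x‖ₑ} ∪
        {x | ‖v‖ₑ / 2 ≤ edist (ψ x) (g x)} : Set X) := by
      filter_upwards [hg] with x hx hxW
      rw [indicator_of_mem hxW] at hx
      refine (half_enorm_le_or_half_enorm_le_edist (ψ x) v).imp (⟨hxW, ·⟩) fun h => ?_
      rwa [mem_ofPred_eq, hx]
    have half_finite : μ W / 2 ≠ ∞ := ENNReal.div_ne_top hWfin two_ne_zero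
    rw [← ENNReal.add_le_add_iff_right half_finite, ENNReal.add_halves]
    grw [measure_mono_ae cover, measure_union_le, hψ]
  · have cover : {x | ‖v‖ₑ / 2 ≤ ‖ψ x‖ₑ} ≤ᵐ[μ]
        (W ∪ {x | ‖v‖ₑ / 2 ≤ edist (ψ x) (g x)} : Set X) := by
      filter_upwards [hg] with x hx hlarge
      refine or_iff_not_imp_left.2 fun hxW => ?_
      rw [indicator_of_notMem hxW] at hx
      rwa [mem_ofPred_eq, hx, edist_zero_right]
    grw [measure_mono_ae cover, measure_union_le, hψ]

lemma coeFn_iterate_ae_eq {f : X → X} (hf : Measure.QuasiMeasurePreserving f μ μ)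
    {T : Lp E p μ → Lp E p μ} (hT : ∀ φ, T φ =ᵐ[μ] φ ∘ f) (φ : Lp E p μ) (n : ℕ) :
    T^[n] φ =ᵐ[μ] φ ∘ f^[n] := by
  induction n with
  | zero => simp
  | succ n ih =>
    rw [Function.iterate_succ_apply', Function.iterate_succ, ← Function.comp_assoc]
    exact (hT _).trans (hf.ae_eq_comp ih)

end Lp

theorem stmt_18_general {X E : Type*} [MeasurableSpace X] [NormedAddCommGroup E] {μ : Measure X}
    [SigmaFinite μ] {f : X → X} (hf : MeasurableEmbedding f) {c : ℝ≥0∞} (hc : c ≠ ∞)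
    (hμ : μ.map f ≤ c • μ) {p : ℝ≥0∞} [Fact (1 ≤ p)] {T : Lp E p μ → Lp E p μ}
    (hT : ∀ φ, T φ =ᵐ[μ] φ ∘ f) {W : Set X} (hW : MeasurableSet W) (hW0 : μ W ≠ 0)
    (hWfin : μ W ≠ ∞) (hWf : Pairwise fun m n : ℕ => Disjoint (f^[m] '' W) (f^[n] '' W)) {v : E}
    (hv : v ≠ 0) {φ : Lp E p μ}
    (hφ : ∀ U, IsOpen U → indicatorConstLp p hW hWfin v ∈ U → PosUpperDensity {n | T^[n] φ ∈ U}) :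
    ∑' n, dSeq μ (μ.comap f^[n]) W ≠ ∞ := by
  obtain ⟨U, hUlarge, hU, hgU⟩ :=
    eventually_nhds_iff.1 (eventually_nhds_indicatorConstLp (p := p) hW hW0 hWfin hv)
  have orbit (n : ℕ) : T^[n] φ =ᵐ[μ] φ ∘ f^[n] := coeFn_iterate_ae_eq
    ⟨hf.measurable, Measure.absolutelyContinuous_of_le_smul hμ⟩ hT φ n
  set S := {x | ‖v‖ₑ / 2 ≤ ‖φ x‖ₑ}
  have large (n : ℕ) : {x | ‖v‖ₑ / 2 ≤ ‖(T^[n] φ) x‖ₑ} =ᵐ[μ] f^[n] ⁻¹' S :=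
    eventuallyEq_set.2 ((orbit n).mono fun x hx => by simp [S, hx])
  have hS : MeasurableSet S := measurableSet_le measurable_const (Lp.stronglyMeasurable φ).enorm
  refine tsum_dSeq_comap_iterate_ne_top hf hc hμ hW hW0 hWf hS (hφ U hU hgU)
    (b := μ W / 2) (C := μ W + μ W / 2) ?_ ?_ (fun n hn => ?_) fun n hn => ?_
  · exact (ENNReal.half_pos hW0).ne'
  · finiteness
  · rw [← measure_congr ((ae_eq_refl W).inter (large n))]
    exact (hUlarge _ hn).1
  · rw [← measure_congr (large n)]
    exact (hUlarge _ hn).2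

/-- For an injective bimeasurable `f` on a σ-finite measure space with
`μ(f⁻¹(B)) ≤ c·μ(B)`, if the composition operator `T_f` on `L^p(X)` is frequently
hypercyclic, then for every forward wandering set `W` of finite positive measure,
`∑_{n∈ℕ} ‖dμ/d(μ∘fⁿ)|_W‖_∞⁻¹ < ∞`, where `ν n` is the measure `B ↦ μ(fⁿ(B))`. -/
theorem stmt_18 {X : Type*} [MeasurableSpace X] (μ : Measure X) [SigmaFinite μ]
    (f : X → X) (hinj : Function.Injective f) (hmeas : Measurable f)
    (himg : ∀ B : Set X, MeasurableSet B → MeasurableSet (f '' B))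
    (c : ℝ≥0∞) (hc0 : 0 < c) (hc : c ≠ ⊤)
    (hbound : ∀ B : Set X, MeasurableSet B → μ (f ⁻¹' B) ≤ c * μ B)
    (p : ℝ≥0∞) [Fact (1 ≤ p)] (hp : p ≠ ⊤)
    (T : Lp ℝ p μ →L[ℝ] Lp ℝ p μ)
    (hT : ∀ φ : Lp ℝ p μ, (T φ : X → ℝ) =ᵐ[μ] fun x => (φ : X → ℝ) (f x))
    (hfh : FreqHC T)
    (W : Set X) (hWm : MeasurableSet W) (hW0 : 0 < μ W) (hWfin : μ W ≠ ⊤)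
    (hWw : Pairwise fun m n : ℕ => Disjoint (f^[m] '' W) (f^[n] '' W))
    (ν : ℕ → Measure X) (hν : ∀ (n : ℕ) (B : Set X), MeasurableSet B → ν n B = μ (f^[n] '' B)) :
    ∑' n : ℕ, dSeq μ (ν n) W ≠ ⊤ := by
  have hf : MeasurableEmbedding f := ⟨hinj, hmeas, fun {B} hB => himg B hB⟩
  have hμ : μ.map f ≤ c • μ := Measure.le_iff.2 fun B hB => by
    simpa [Measure.map_apply hmeas hB] using hbound B hB
  have hν_comap (n : ℕ) : ν n = μ.comap f^[n] := Measure.ext fun B hB => by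
    rw [hν n B hB, (measurableEmbedding_iterate hf n).comap_apply]
  simp only [hν_comap]
  obtain ⟨φ, hφ⟩ := hfh
  refine stmt_18_general hf hc hμ hT hWm hW0.ne' hWfin hWw (one_ne_zero (α := ℝ)) (φ := φ)
    fun U hU hgU => ?_
  simpa only [FunLike.coe_pow_eq_iterate] using (hφ U hU ⟨_, hgU⟩).posUpperDensity
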